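/- Let k ≥ 2 and n ≥ 4 be integers with n ≥ k+1, and let G be a subdivision of the complete graph K_n. Then G is k-color connectable and cc_k(G) = k. -/

import Mathlib

open SimpleGraph

/-- `c` is a `k`-color connecting edge-coloring of `G`: between every pair of distinct
vertices there is a path whose edges use at least `k` different colors. -/
def SimpleGraph.IsKColorConnecting {V : Type*} (G : SimpleGraph V) (k : ℕ)
    (c : Sym2 V → ℕ) : Prop :=
  ∀ u v : V, u ≠ v → ∃ p : G.Walk u v, p.IsPath ∧ k ≤ (p.edges.map c).toFinset.card

/-- `G` is `k`-color connectable: it admits a `k`-color connecting coloring. -/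
def SimpleGraph.KColorConnectable {V : Type*} (G : SimpleGraph V) (k : ℕ) : Prop :=
  ∃ c : Sym2 V → ℕ, G.IsKColorConnecting k c

/-- The `k`-color connection number `cc_k(G)`: the minimum number of colors used on the
edges of `G` by a `k`-color connecting coloring. -/
noncomputable def SimpleGraph.ccConn {V : Type*} (G : SimpleGraph V) (k : ℕ) : ℕ :=
  sInf {n : ℕ | ∃ c : Sym2 V → ℕ, G.IsKColorConnecting k c ∧ (c '' G.edgeSet).ncard = n}

/-- The graph obtained from `G` by subdividing the edge `uv`: delete `uv` and add a new
vertex `none` joined to `u` and `v`. -/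
def SimpleGraph.subdivideEdge {V : Type*} (G : SimpleGraph V) (u v : V) :
    SimpleGraph (Option V) :=
  ((G.deleteEdges {s(u, v)}).map Function.Embedding.some) ⊔
    SimpleGraph.fromEdgeSet {s(none, some u), s(none, some v)}

/-- `IsSubdivision G H` : `H` is (up to isomorphism) obtained from `G` by a finite,
possibly empty, sequence of single-edge subdivisions. -/
inductive IsSubdivision : ∀ {V W : Type u}, SimpleGraph V → SimpleGraph W → Prop
  | of_iso {V W : Type u} {G : SimpleGraph V} {H : SimpleGraph W} :
      Nonempty (G ≃g H) → IsSubdivision G H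
  | step {V W : Type u} {G : SimpleGraph V} {H : SimpleGraph W} (u v : V) (h : G.Adj u v) :
      IsSubdivision (G.subdivideEdge u v) H → IsSubdivision G H


/-- Working invariant: a coloring with values below `k` such that any two distinct vertices
are joined by a path seeing every color below `k`. -/
def CCGood {V : Type*} (G : SimpleGraph V) (k : ℕ) (c : Sym2 V → ℕ) : Prop :=
  (∀ e, c e < k) ∧
    ∀ x y : V, x ≠ y → ∃ p : G.Walk x y, p.IsPath ∧ ∀ i < k, ∃ e ∈ p.edges, c e = i

theorem ccgood_iso {V W : Type*} {G : SimpleGraph V} {H : SimpleGraph W} (f : G ≃g H)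
    {k : ℕ} (h : ∃ c, CCGood G k c) : ∃ c, CCGood H k c := by
  obtain ⟨c, h1, h2⟩ := h
  refine ⟨fun e => c (e.map f.symm), fun e => h1 _, fun x y hxy => ?_⟩
  obtain ⟨p, hp, hc⟩ := h2 (f.symm x) (f.symm y) (fun h => hxy (f.symm.injective h))
  refine ⟨(p.map f.toHom).copy (by simp) (by simp), ?_, ?_⟩
  · simpa using Walk.IsPath.map f.injective hp
  · intro i hi
    obtain ⟨e, he, hce⟩ := hc i hi
    refine ⟨e.map f, ?_, ?_⟩
    · simp only [Walk.edges_copy, Walk.edges_map, List.mem_map]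
      exact ⟨e, he, rfl⟩
    · change c ((e.map f).map f.symm) = i
      rw [Sym2.map_map]
      have : (f.symm ∘ f : V → V) = id := by ext; simp
      rw [this]; simpa using hce

theorem cc_glue {V : Type*} {G : SimpleGraph V} {a b x y : V} (p : G.Walk a b)
    (q : G.Walk x y) (h : G.Adj b x) (hp : p.IsPath) (hq : q.IsPath)
    (hd : ∀ z ∈ p.support, z ∉ q.support) : (p.append (Walk.cons h q)).IsPath := by
  rw [Walk.isPath_def, Walk.support_append, Walk.support_cons, List.tail_cons,
    List.nodup_append]
  exact ⟨hp.support_nodup, hq.support_nodup, fun z hz w hw hzw => hd z hz (hzw ▸ hw)⟩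

/-! ### The subdivision step -/

theorem subdiv_adj_some {V : Type*} {G : SimpleGraph V} {u v x y : V} (h : G.Adj x y)
    (hne : s(x, y) ≠ s(u, v)) : (G.subdivideEdge u v).Adj (some x) (some y) := by
  refine Or.inl ?_
  rw [SimpleGraph.map_adj]
  exact ⟨x, y, by simp [h] ; simpa using hne, rfl, rfl⟩

theorem subdiv_adj_none {V : Type*} {G : SimpleGraph V} {u v x : V} (h : x = u ∨ x = v) :
    (G.subdivideEdge u v).Adj none (some x) := by
  refine Or.inr ?_
  rw [SimpleGraph.fromEdgeSet_adj]
  rcases h with rfl | rfl <;> simp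

open Classical in
/-- Coloring of the subdivided graph: both halves get the color of the subdivided edge. -/
noncomputable def subdivColor {V : Type*} (u v : V) (c : Sym2 V → ℕ) (e : Sym2 (Option V)) : ℕ :=
  if none ∈ e then c s(u, v) else c (e.map (fun o => o.getD u))

theorem subdivColor_some {V : Type*} (u v : V) (c : Sym2 V → ℕ) (x y : V) :
    subdivColor u v c s(some x, some y) = c s(x, y) := by
  simp [subdivColor]

theorem subdivColor_none {V : Type*} (u v : V) (c : Sym2 V → ℕ) (x : Option V) :
    subdivColor u v c s(none, x) = c s(u, v) := by
  simp [subdivColor]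

theorem subdiv_lift {V : Type*} {G : SimpleGraph V} {u v : V} (c : Sym2 V → ℕ) {x y : V}
    (p : G.Walk x y) (hp : p.IsPath) :
    ∃ q : (G.subdivideEdge u v).Walk (some x) (some y), q.IsPath ∧
      (none ∈ q.support → s(u, v) ∈ p.edges) ∧ (∀ a, some a ∈ q.support → a ∈ p.support) ∧
      ∀ e ∈ p.edges, ∃ e' ∈ q.edges, subdivColor u v c e' = c e := by
  induction p with
  | nil => exact ⟨Walk.nil, by simp⟩
  | @cons x w y h p ih =>
    rw [Walk.cons_isPath_iff] at hp
    obtain ⟨q, hq, hn, hs, hc⟩ := ih hp.1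
    by_cases he : s(x, w) = s(u, v)
    · have hxu : x = u ∨ x = v := by
        have : x ∈ s(u, v) := by rw [← he]; simp
        simpa using this
      have hwu : w = u ∨ w = v := by
        have : w ∈ s(u, v) := by rw [← he]; simp
        simpa using this
      have hnq : none ∉ q.support := by
        intro hnq
        have := hn hnq
        rw [← he] at this
        exact hp.2 (p.fst_mem_support_of_mem_edges this)
      refine ⟨Walk.cons (subdiv_adj_none hxu).symm (Walk.cons (subdiv_adj_none hwu) q),
        ?_, ?_, ?_, ?_⟩
      · rw [Walk.cons_isPath_iff, Walk.cons_isPath_iff]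
        refine ⟨⟨hq, hnq⟩, ?_⟩
        simp only [Walk.support_cons, List.mem_cons, not_or]
        exact ⟨by simp, fun h => hp.2 (hs _ h)⟩
      · intro _; simp [he]
      · intro a ha
        simp only [Walk.support_cons, List.mem_cons] at ha ⊢
        rcases ha with ha | ha | ha
        · left; simpa using ha
        · simp at ha
        · exact Or.inr (hs _ ha)
      · intro e hee
        simp only [Walk.edges_cons, List.mem_cons] at hee ⊢
        rcases hee with rfl | hee
        · exact ⟨s(none, some w), by simp, by rw [subdivColor_none, he]⟩
        · obtain ⟨e', h1, h2⟩ := hc e hee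
          exact ⟨e', by simp [h1], h2⟩
    · refine ⟨Walk.cons (subdiv_adj_some h he) q, ?_, ?_, ?_, ?_⟩
      · rw [Walk.cons_isPath_iff]
        exact ⟨hq, fun h => hp.2 (hs _ h)⟩
      · intro hh
        simp only [Walk.support_cons, List.mem_cons] at hh
        rcases hh with hh | hh
        · simp at hh
        · simp [hn hh]
      · intro a ha
        simp only [Walk.support_cons, List.mem_cons] at ha ⊢
        rcases ha with ha | ha
        · left; simpa using ha
        · exact Or.inr (hs _ ha)
      · intro e hee
        simp only [Walk.edges_cons, List.mem_cons] at hee ⊢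
        rcases hee with rfl | hee
        · exact ⟨s(some x, some w), by simp, by rw [subdivColor_some]⟩
        · obtain ⟨e', h1, h2⟩ := hc e hee
          exact ⟨e', by simp [h1], h2⟩

/-- From the new vertex to an old vertex `y ≠ a`, where `a` is one end of the edge. -/
theorem subdiv_none_aux {V : Type*} {G : SimpleGraph V} {u v a b : V} {k : ℕ}
    {c : Sym2 V → ℕ} (hab : s(a, b) = s(u, v)) {y : V} (p : G.Walk a y) (hp : p.IsPath)
    (hay : a ≠ y) (hc : ∀ i < k, ∃ e ∈ p.edges, c e = i) :
    ∃ q : (G.subdivideEdge u v).Walk none (some y), q.IsPath ∧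
      ∀ i < k, ∃ e ∈ q.edges, subdivColor u v c e = i := by
  have ha : a = u ∨ a = v := by
    have : a ∈ s(u, v) := by rw [← hab]; simp
    simpa using this
  have hb : b = u ∨ b = v := by
    have : b ∈ s(u, v) := by rw [← hab]; simp
    simpa using this
  by_cases hm : s(u, v) ∈ p.edges
  · cases p with
    | nil => exact absurd rfl hay
    | @cons _ w _ h p =>
      rw [Walk.cons_isPath_iff] at hp
      have hnp : s(u, v) ∉ p.edges := by
        rw [← hab]
        exact fun hh => hp.2 (p.fst_mem_support_of_mem_edges hh)
      have haw : s(u, v) = s(a, w) := by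
        simp only [Walk.edges_cons, List.mem_cons] at hm
        exact hm.resolve_right hnp
      have hwb : w = b := by
        rw [← hab] at haw
        exact (Sym2.congr_right.mp haw).symm
      subst hwb
      obtain ⟨q, hq, hn, -, hqc⟩ := subdiv_lift (u := u) (v := v) c p hp.1
      refine ⟨Walk.cons (subdiv_adj_none hb) q, ?_, ?_⟩
      · rw [Walk.cons_isPath_iff]; exact ⟨hq, fun h => hnp (hn h)⟩
      · intro i hi
        obtain ⟨e, he, hei⟩ := hc i hi
        simp only [Walk.edges_cons, List.mem_cons] at he ⊢
        rcases he with rfl | he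
        · exact ⟨s(none, some w), by simp, by rw [subdivColor_none, haw, hei]⟩
        · obtain ⟨e', h1, h2⟩ := hqc e he
          exact ⟨e', by simp [h1], by rw [h2, hei]⟩
  · obtain ⟨q, hq, hn, -, hqc⟩ := subdiv_lift (u := u) (v := v) c p hp
    refine ⟨Walk.cons (subdiv_adj_none ha) q, ?_, ?_⟩
    · rw [Walk.cons_isPath_iff]; exact ⟨hq, fun h => hm (hn h)⟩
    · intro i hi
      obtain ⟨e, he, hei⟩ := hc i hi
      obtain ⟨e', h1, h2⟩ := hqc e he
      exact ⟨e', by simp [h1], by rw [h2, hei]⟩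

theorem ccgood_subdiv {V : Type*} {G : SimpleGraph V} {u v : V} (huv : G.Adj u v) {k : ℕ}
    (h : ∃ c, CCGood G k c) : ∃ c, CCGood (G.subdivideEdge u v) k c := by
  obtain ⟨c, h1, h2⟩ := h
  have key : ∀ y : V, ∃ q : (G.subdivideEdge u v).Walk none (some y), q.IsPath ∧
      ∀ i < k, ∃ e ∈ q.edges, subdivColor u v c e = i := by
    intro y
    by_cases hy : u = y
    · have hvy : v ≠ y := hy ▸ huv.ne.symm
      obtain ⟨p, hp, hc⟩ := h2 v y hvy
      exact subdiv_none_aux (b := u) Sym2.eq_swap p hp hvy hc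
    · obtain ⟨p, hp, hc⟩ := h2 u y hy
      exact subdiv_none_aux (b := v) rfl p hp hy hc
  refine ⟨subdivColor u v c, ?_, ?_⟩
  · intro e
    unfold subdivColor
    split_ifs <;> exact h1 _
  · intro x y hxy
    rcases x with _ | x <;> rcases y with _ | y
    · exact absurd rfl hxy
    · exact key y
    · obtain ⟨q, hq, hc⟩ := key x
      exact ⟨q.reverse, hq.reverse, by simpa using hc⟩
    · obtain ⟨p, hp, hc⟩ := h2 x y (fun h => hxy (h ▸ rfl))
      obtain ⟨q, hq, -, -, hqc⟩ := subdiv_lift (u := u) (v := v) c p hp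
      refine ⟨q, hq, fun i hi => ?_⟩
      obtain ⟨e, he, hei⟩ := hc i hi
      obtain ⟨e', h1, h2⟩ := hqc e he
      exact ⟨e', h1, by rw [h2, hei]⟩

theorem ccgood_of_subdivision {V W : Type u} {G : SimpleGraph V} {H : SimpleGraph W}
    (h : IsSubdivision G H) (k : ℕ) [Finite V] (hG : ∃ c, CCGood G k c) :
    Finite W ∧ ∃ c, CCGood H k c := by
  revert hG
  rename_i hfin
  revert hfin
  induction h with
  | of_iso h =>
    intro hf hG
    obtain ⟨f⟩ := h
    exact ⟨Finite.of_equiv _ f.toEquiv, ccgood_iso f hG⟩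
  | step u v huv _ ih =>
    intro hf hG
    exact ih (ccgood_subdiv huv hG)

/-! ### The complete graph: coloring along a wheel -/

/-- The spoke at `i` or the rim edge leaving `i`. -/
def IsWheelEdge {m : ℕ} (e : Sym2 (Option (ZMod m))) (i : ZMod m) : Prop :=
  e = s(some i, none) ∨ e = s(some i, some (i + 1))

theorem wheel_unique {m : ℕ} (hm : 3 ≤ m) {e : Sym2 (Option (ZMod m))} {i j : ZMod m}
    (hi : IsWheelEdge e i) (hj : IsWheelEdge e j) : i = j := by
  have h2 : (2 : ZMod m) ≠ 0 := by
    intro h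
    have : ((2 : ℕ) : ZMod m) = 0 := by exact_mod_cast h
    rw [ZMod.natCast_eq_zero_iff] at this
    exact absurd (Nat.le_of_dvd (by norm_num) this) (by omega)
  unfold IsWheelEdge at hi hj
  rcases hi with rfl | rfl <;> rcases hj with hj | hj <;> simp at hj
  · exact hj
  · rcases hj with hj | ⟨h3, h4⟩
    · exact hj
    · exact absurd (by linear_combination h4 - h3 : (2 : ZMod m) = 0) h2

open Classical in
/-- Color of an edge of the wheel. -/
noncomputable def wheelColor (m k : ℕ) (e : Sym2 (Option (ZMod m))) : ℕ :=
  if h : ∃ i, IsWheelEdge e i then min h.choose.val (k - 1) else 0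

theorem wheelColor_eq {m : ℕ} (hm : 3 ≤ m) (k : ℕ) {e : Sym2 (Option (ZMod m))} {i : ZMod m}
    (hi : IsWheelEdge e i) : wheelColor m k e = min i.val (k - 1) := by
  have h : ∃ i, IsWheelEdge e i := ⟨i, hi⟩
  rw [wheelColor, dif_pos h, wheel_unique hm h.choose_spec hi]

theorem zmod_cast_inj {m a b : ℕ} (ha : a < m) (hb : b < m) (h : (a : ZMod m) = b) : a = b := by
  rw [ZMod.natCast_eq_natCast_iff'] at h
  rwa [Nat.mod_eq_of_lt ha, Nat.mod_eq_of_lt hb] at h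

theorem wheel_arc {m : ℕ} (hm : 3 ≤ m) (i : ZMod m) (d : ℕ) (hd : d < m) :
    ∀ j : ZMod m, j = i + d →
    ∃ p : (⊤ : SimpleGraph (Option (ZMod m))).Walk (some i) (some j), p.IsPath ∧
      (∀ x ∈ p.support, ∃ t : ℕ, t ≤ d ∧ x = some (i + t)) ∧
      ∀ t : ℕ, t < d → s(some (i + t), some (i + t + 1)) ∈ p.edges := by
  induction d with
  | zero =>
    intro j hj
    have : j = i := by simpa using hj
    subst this
    exact ⟨Walk.nil, by simp, by simp, by simp⟩
  | succ d ih =>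
    intro j hj
    obtain ⟨p, hp, hs, he⟩ := ih (by omega) (i + d) rfl
    have hns : some j ∉ p.support := by
      intro h
      obtain ⟨t, ht, hjt⟩ := hs _ h
      rw [Option.some_inj, hj] at hjt
      have := zmod_cast_inj hd (by omega) (add_left_cancel hjt)
      omega
    have hadj : (⊤ : SimpleGraph (Option (ZMod m))).Adj (some (i + d)) (some j) := by
      rw [SimpleGraph.top_adj]
      intro h
      exact hns (h ▸ p.end_mem_support)
    refine ⟨p.concat hadj, hp.concat hns hadj, ?_, ?_⟩
    · intro x hx
      rw [Walk.support_concat, List.mem_append] at hx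
      rcases hx with hx | hx
      · obtain ⟨t, ht, h⟩ := hs x hx
        exact ⟨t, by omega, h⟩
      · exact ⟨d + 1, le_rfl, by rw [List.mem_singleton] at hx; rw [hx, hj]⟩
    · intro t ht
      rw [Walk.edges_concat, List.concat_eq_append, List.mem_append]
      rcases Nat.lt_succ_iff_lt_or_eq.mp ht with h | rfl
      · exact Or.inl (he t h)
      · right
        rw [hj]; push_cast; simp [add_assoc]

theorem wheel_path_hub {m : ℕ} (hm : 3 ≤ m) (i : ZMod m) :
    ∃ p : (⊤ : SimpleGraph (Option (ZMod m))).Walk (some i) none, p.IsPath ∧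
      ∀ t : ZMod m, ∃ e ∈ p.edges, IsWheelEdge e t := by
  have : NeZero m := ⟨by omega⟩
  obtain ⟨p, hp, hs, he⟩ := wheel_arc hm i (m - 1) (by omega) _ rfl
  have hadj : (⊤ : SimpleGraph (Option (ZMod m))).Adj (some (i + (m - 1 : ℕ))) none := by simp
  refine ⟨p.concat hadj, hp.concat ?_ hadj, ?_⟩
  · intro h
    obtain ⟨t, _, h⟩ := hs _ h
    simp at h
  · intro t
    have ht : t = i + ((t - i).val : ℕ) := by simp
    have hlt := ZMod.val_lt (t - i)
    set r := (t - i).val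
    simp only [Walk.edges_concat, List.concat_eq_append, List.mem_append, List.mem_singleton]
    by_cases hr : r < m - 1
    · exact ⟨_, Or.inl (he r hr), Or.inr (by rw [← ht])⟩
    · have : r = m - 1 := by omega
      exact ⟨_, Or.inr rfl, Or.inl (by rw [ht, this])⟩

theorem wheel_path_rim {m : ℕ} (hm : 3 ≤ m) (i j : ZMod m) (hij : i ≠ j) :
    ∃ p : (⊤ : SimpleGraph (Option (ZMod m))).Walk (some i) (some j), p.IsPath ∧
      ∀ t : ZMod m, ∃ e ∈ p.edges, IsWheelEdge e t := by
  have : NeZero m := ⟨by omega⟩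
  obtain ⟨d, hd0, hdm, hj⟩ : ∃ d : ℕ, 0 < d ∧ d < m ∧ j = i + d := by
    refine ⟨(j - i).val, ?_, ZMod.val_lt _, by simp⟩
    rw [Nat.pos_iff_ne_zero, Ne, ZMod.val_eq_zero, sub_eq_zero]
    exact hij.symm
  obtain ⟨p, hp, hps, hpe⟩ := wheel_arc hm i (d - 1) (by omega) _ rfl
  obtain ⟨q, hq, hqs, hqe⟩ := wheel_arc hm j (m - d - 1) (by omega) _ rfl
  have hadj : (⊤ : SimpleGraph (Option (ZMod m))).Adj none (some (j + (m - d - 1 : ℕ))) := by simp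
  have hadj' : (⊤ : SimpleGraph (Option (ZMod m))).Adj (some (i + (d - 1 : ℕ))) none := by simp
  have hnq : none ∉ q.reverse.support := by
    intro h
    rw [Walk.support_reverse, List.mem_reverse] at h
    obtain ⟨t, _, h⟩ := hqs _ h
    simp at h
  have hq' : (Walk.cons hadj q.reverse).IsPath := hq.reverse.cons hnq
  refine ⟨p.append (Walk.cons hadj' (Walk.cons hadj q.reverse)),
    cc_glue _ _ _ hp hq' ?_, ?_⟩
  · intro z hz hz'
    obtain ⟨t, ht, rfl⟩ := hps _ hz
    simp only [Walk.support_cons, Walk.support_reverse, List.mem_cons, List.mem_reverse] at hz'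
    rcases hz' with h | h
    · simp at h
    · obtain ⟨t', ht', h⟩ := hqs _ h
      rw [Option.some_inj, hj, add_assoc] at h
      have h := add_left_cancel h
      rw [← Nat.cast_add] at h
      have := zmod_cast_inj (by omega) (by omega) h
      omega
  · intro t
    have ht : t = i + ((t - i).val : ℕ) := by simp
    have hlt := ZMod.val_lt (t - i)
    set r := (t - i).val
    simp only [Walk.edges_append, Walk.edges_cons, Walk.edges_reverse, List.mem_append,
      List.mem_cons, List.mem_reverse]
    by_cases h1 : r < d - 1
    · exact ⟨_, Or.inl (hpe r h1), Or.inr (by rw [← ht])⟩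
    by_cases h2 : r = d - 1
    · exact ⟨_, Or.inr (Or.inl rfl), Or.inl (by rw [ht, h2])⟩
    have ht' : t = j + ((r - d : ℕ) : ZMod m) := by
      rw [hj, add_assoc, ← Nat.cast_add, show d + (r - d) = r by omega]; exact ht
    by_cases h3 : r < m - 1
    · exact ⟨_, Or.inr (Or.inr (Or.inr (hqe (r - d) (by omega)))), Or.inr (by rw [← ht'])⟩
    · refine ⟨_, Or.inr (Or.inr (Or.inl rfl)), Or.inl ?_⟩
      rw [ht', show r - d = m - d - 1 by omega, Sym2.eq_swap]

theorem ccgood_wheel {m k : ℕ} (hm : 3 ≤ m) (hk : 0 < k) (hkm : k ≤ m) :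
    ∃ c, CCGood (⊤ : SimpleGraph (Option (ZMod m))) k c := by
  have hcol : ∀ {x y : Option (ZMod m)} (p : (⊤ : SimpleGraph (Option (ZMod m))).Walk x y),
      (∀ t : ZMod m, ∃ e ∈ p.edges, IsWheelEdge e t) →
      ∀ i < k, ∃ e ∈ p.edges, wheelColor m k e = i := by
    intro x y p hp i hi
    obtain ⟨e, he, hw⟩ := hp (i : ZMod m)
    refine ⟨e, he, ?_⟩
    rw [wheelColor_eq hm k hw, ZMod.val_cast_of_lt (by omega)]
    omega
  refine ⟨wheelColor m k, ?_, ?_⟩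
  · intro e
    unfold wheelColor
    split_ifs
    · exact lt_of_le_of_lt (min_le_right _ _) (by omega)
    · exact hk
  · intro x y hxy
    rcases x with _ | x <;> rcases y with _ | y
    · exact absurd rfl hxy
    · obtain ⟨p, hp, hc⟩ := wheel_path_hub hm y
      exact ⟨p.reverse, hp.reverse, hcol _ (by simpa using hc)⟩
    · obtain ⟨p, hp, hc⟩ := wheel_path_hub hm x
      exact ⟨p, hp, hcol _ hc⟩
    · obtain ⟨p, hp, hc⟩ := wheel_path_rim hm x y (fun h => hxy (h ▸ rfl))
      exact ⟨p, hp, hcol _ hc⟩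

theorem ccgood_complete {n k : ℕ} (hn : 4 ≤ n) (hk : 0 < k) (hkn : k + 1 ≤ n) :
    ∃ c, CCGood (⊤ : SimpleGraph (Fin n)) k c := by
  have : NeZero (n - 1) := ⟨by omega⟩
  have e : Option (ZMod (n - 1)) ≃ Fin n :=
    Fintype.equivFinOfCardEq (by rw [Fintype.card_option, ZMod.card]; omega)
  have f : (⊤ : SimpleGraph (Option (ZMod (n - 1)))) ≃g (⊤ : SimpleGraph (Fin n)) :=
    ⟨e, by simp⟩
  exact ccgood_iso f (ccgood_wheel (by omega) hk (by omega))

theorem connecting_ncard {W : Type*} [Finite W] {G : SimpleGraph W} {k : ℕ} {c : Sym2 W → ℕ}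
    (h : G.IsKColorConnecting k c) {x y : W} (hxy : x ≠ y) : k ≤ (c '' G.edgeSet).ncard := by
  obtain ⟨p, -, hp⟩ := h x y hxy
  refine hp.trans ?_
  rw [← Set.ncard_coe_finset]
  refine Set.ncard_le_ncard ?_ (Set.toFinite _)
  intro i hi
  simp only [List.coe_toFinset, List.mem_map, Set.mem_ofPred_eq] at hi
  obtain ⟨e, he, rfl⟩ := hi
  exact ⟨e, p.edges_subset_edgeSet he, rfl⟩

theorem subdivision_nontrivial {V W : Type u} {G : SimpleGraph V} {H : SimpleGraph W}
    (h : IsSubdivision G H) : Nontrivial V → Nontrivial W := by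
  induction h with
  | of_iso h =>
    obtain ⟨f⟩ := h
    intro _
    exact f.symm.toEquiv.nontrivial
  | step u v huv _ ih =>
    intro _
    exact ih inferInstance

theorem stmt_9 (k n : ℕ) (hk : 2 ≤ k) (hn : 4 ≤ n) (hkn : k + 1 ≤ n)
    {W : Type} (G : SimpleGraph W)
    (hsub : IsSubdivision (⊤ : SimpleGraph (Fin n)) G) :
    G.KColorConnectable k ∧ G.ccConn k = k := by
  obtain ⟨hfin, c, h1, h2⟩ :=
    ccgood_of_subdivision hsub k (ccgood_complete hn (by omega) hkn)
  have : Nontrivial (Fin n) := Fin.nontrivial_iff_two_le.mpr (by omega)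
  obtain ⟨x, y, hxy⟩ := (subdivision_nontrivial hsub inferInstance).exists_pair_ne
  have hcon : G.IsKColorConnecting k c := by
    intro a b hab
    obtain ⟨p, hp, hc⟩ := h2 a b hab
    refine ⟨p, hp, ?_⟩
    have : Finset.range k ⊆ (p.edges.map c).toFinset := by
      intro i hi
      rw [List.mem_toFinset, List.mem_map]
      exact hc i (Finset.mem_range.mp hi)
    simpa using Finset.card_le_card this
  refine ⟨⟨c, hcon⟩, le_antisymm ?_ ?_⟩
  · refine Nat.sInf_le ⟨c, hcon, le_antisymm ?_ (connecting_ncard hcon hxy)⟩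
    have : c '' G.edgeSet ⊆ (Finset.range k : Set ℕ) := by
      rintro _ ⟨e, -, rfl⟩
      simpa using h1 e
    simpa using Set.ncard_le_ncard this (Finset.finite_toSet _)
  · refine le_csInf ⟨_, c, hcon, rfl⟩ ?_
    rintro _ ⟨c', hc', rfl⟩
    exact connecting_ncard hc' hxy
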